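/- arXiv:1503.04886 — 4 statements merged into one kernel-verified Lean document; each statement's English description precedes it below -/
import Mathlib

section
/- Let x, y, x̃, ỹ ∈ ℝⁿ with first entries ξ₀ ≠ 0 (of x) and ξ̃₀ ≠ 0 (of x̃), let ε > 0 satisfy ‖x̃ − x‖₁ ≤ ε‖x‖₁ and ‖ỹ − y‖₁ ≤ ε‖y‖₁, and set ε̃ = |1/ξ₀ − 1/ξ̃₀| / |1/ξ₀|. Then the Gohberg–Semencul expressions satisfy ‖GSF(x,y) − GSF(x̃,ỹ)‖₁ ≤ (2/|ξ₀|)·[ε + (ε + (1+ε)ε̃)(1+ε)]·‖x‖₁·‖y‖₁. -/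
/-!
Write `B(x, y) = L_x R_y − L⁰_y R⁰_x`, so that `GSF x y = ξ₀⁻¹ B(x, y)` and `B` is bilinear. Each
column of each of the four Toeplitz factors consists of distinct entries of the defining vector
(padded with zeros), so each factor has `1`-norm at most the `ℓ¹` norm of that vector
(`sum_abs_dite_le`). Submultiplicativity then gives `‖B(x, y)‖₁ ≤ 2 ‖x‖₁ ‖y‖₁` (`gsB_bound`).
The theorem follows by applying this to the three terms of the decomposition
`GSF x y − GSF x̃ ỹ = ξ₀⁻¹ (B(x, y − ỹ) + B(x − x̃, ỹ)) + (ξ₀⁻¹ − ξ̃₀⁻¹) B(x̃, ỹ)`,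
where `‖x̃‖₁ ≤ (1 + ε) ‖x‖₁`, `‖ỹ‖₁ ≤ (1 + ε) ‖y‖₁` and `|ξ₀⁻¹ − ξ̃₀⁻¹| = ε̃ / |ξ₀|`.
-/

open Matrix

noncomputable section

/-- ℓ¹ norm of a vector. -/
def vecNorm1 {n : ℕ} (x : Fin n → ℝ) : ℝ := ∑ i, |x i|

/-- ℓ² norm of a vector. -/
def vecNorm2 {n : ℕ} (x : Fin n → ℝ) : ℝ := Real.sqrt (∑ i, (x i) ^ 2)

/-- Matrix operator norm induced by the ℓ¹ vector norm (max absolute column sum). -/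
def matNorm1 {n : ℕ} (M : Matrix (Fin n) (Fin n) ℝ) : ℝ := ⨆ j, ∑ i, |M i j|

/-- Matrix operator norm induced by the ℓ∞ vector norm (max absolute row sum). -/
def matNormInf {n : ℕ} (M : Matrix (Fin n) (Fin n) ℝ) : ℝ := ⨆ i, ∑ j, |M i j|

/-- Spectral norm: operator norm induced by the ℓ² vector norm. -/
def matNorm2 {n : ℕ} (M : Matrix (Fin n) (Fin n) ℝ) : ℝ :=
  ‖Matrix.toEuclideanCLM (𝕜 := ℝ) M‖

/-- The last index of `Fin n`. -/
def lastIdx (n : ℕ) [NeZero n] : Fin n := ⟨n - 1, by have := Nat.pos_of_neZero n; omega⟩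

/-- Lower triangular Toeplitz matrix built from `x`. -/
def Lmat {n : ℕ} (x : Fin n → ℝ) : Matrix (Fin n) (Fin n) ℝ :=
  Matrix.of fun i j =>
    if (j : ℕ) ≤ i then x ⟨(i : ℕ) - j, lt_of_le_of_lt (Nat.sub_le _ _) i.isLt⟩ else 0

/-- Upper triangular Toeplitz matrix built from `y`. -/
def Rmat {n : ℕ} (y : Fin n → ℝ) : Matrix (Fin n) (Fin n) ℝ :=
  Matrix.of fun i j =>
    if (i : ℕ) ≤ j then y ⟨n - 1 - ((j : ℕ) - i), by have := i.isLt; omega⟩ else 0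

/-- Strictly lower triangular Toeplitz matrix built from `y`. -/
def L0mat {n : ℕ} (y : Fin n → ℝ) : Matrix (Fin n) (Fin n) ℝ :=
  Matrix.of fun i j =>
    if (j : ℕ) < i then y ⟨(i : ℕ) - j - 1, by have := i.isLt; omega⟩ else 0

/-- Strictly upper triangular Toeplitz matrix built from `x`. -/
def R0mat {n : ℕ} (x : Fin n → ℝ) : Matrix (Fin n) (Fin n) ℝ :=
  Matrix.of fun i j =>
    if h : (i : ℕ) < j then x ⟨n - ((j : ℕ) - i), by have := j.isLt; omega⟩ else 0

/-- The Gohberg–Semencul expression. -/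
def GSF {n : ℕ} [NeZero n] (x y : Fin n → ℝ) : Matrix (Fin n) (Fin n) ℝ :=
  (x 0)⁻¹ • (Lmat x * Rmat y - L0mat y * R0mat x)

/-- Every absolute column sum of `M` is at most `c`, i.e. `‖M‖₁ ≤ c` without reference to the
supremum defining `matNorm1`. -/
def ColBound {n : ℕ} (M : Matrix (Fin n) (Fin n) ℝ) (c : ℝ) : Prop :=
  ∀ j, ∑ i, |M i j| ≤ c

lemma ColBound.add {n : ℕ} {M N : Matrix (Fin n) (Fin n) ℝ} {c d : ℝ}
    (hM : ColBound M c) (hN : ColBound N d) : ColBound (M + N) (c + d) := fun j =>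
  calc ∑ i, |(M + N) i j| ≤ ∑ i, (|M i j| + |N i j|) :=
        Finset.sum_le_sum fun i _ => abs_add_le _ _
    _ ≤ c + d := by rw [Finset.sum_add_distrib]; exact add_le_add (hM j) (hN j)

lemma ColBound.smul {n : ℕ} {M : Matrix (Fin n) (Fin n) ℝ} {c : ℝ} (a : ℝ)
    (hM : ColBound M c) : ColBound (a • M) (|a| * c) := fun j => by
  simp only [Matrix.smul_apply, smul_eq_mul, abs_mul, ← Finset.mul_sum]
  exact mul_le_mul_of_nonneg_left (hM j) (abs_nonneg a)

lemma ColBound.mul {n : ℕ} {M N : Matrix (Fin n) (Fin n) ℝ} {c d : ℝ} (hc : 0 ≤ c)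
    (hM : ColBound M c) (hN : ColBound N d) : ColBound (M * N) (c * d) := fun j =>
  calc ∑ i, |(M * N) i j| ≤ ∑ i, ∑ k, |M i k| * |N k j| := by
        refine Finset.sum_le_sum fun i _ => ?_
        simp only [Matrix.mul_apply, ← abs_mul]
        exact Finset.abs_sum_le_sum_abs _ _
    _ = ∑ k, (∑ i, |M i k|) * |N k j| := by
        rw [Finset.sum_comm]; simp only [Finset.sum_mul]
    _ ≤ ∑ k, c * |N k j| :=
        Finset.sum_le_sum fun k _ => mul_le_mul_of_nonneg_right (hM k) (abs_nonneg _)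
    _ ≤ c * d := by rw [← Finset.mul_sum]; exact mul_le_mul_of_nonneg_left (hN j) hc

lemma ColBound.matNorm1_le {n : ℕ} [NeZero n] {M : Matrix (Fin n) (Fin n) ℝ} {c : ℝ}
    (hM : ColBound M c) : matNorm1 M ≤ c := ciSup_le hM

lemma vecNorm1_nonneg {n : ℕ} (x : Fin n → ℝ) : 0 ≤ vecNorm1 x :=
  Finset.sum_nonneg fun _ _ => abs_nonneg _

/-- A zero-padded selection of distinct entries of `x` has `ℓ¹` norm at most that of `x`. -/
lemma sum_abs_dite_le {n : ℕ} (x : Fin n → ℝ) (P : Fin n → Prop) [DecidablePred P]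
    (f : ∀ i, P i → Fin n) (hf : ∀ i k hi hk, f i hi = f k hk → i = k) :
    ∑ i, |if h : P i then x (f i h) else 0| ≤ vecNorm1 x := by
  classical
  set F : Fin n → Fin n := fun i => if h : P i then f i h else i with hF
  have hinj : Set.InjOn F (Finset.univ.filter P : Finset (Fin n)) := by
    intro i hi k hk hik
    simp only [Finset.coe_filter, Finset.mem_univ, true_and, Set.mem_ofPred_eq] at hi hk
    simp only [hF, hi, hk, dif_pos] at hik
    exact hf i k hi hk hik
  calc ∑ i, |if h : P i then x (f i h) else 0|
      = ∑ i, if P i then |x (F i)| else 0 := by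
        refine Finset.sum_congr rfl fun i _ => ?_
        by_cases h : P i <;> simp [hF, h]
    _ = ∑ k ∈ (Finset.univ.filter P).image F, |x k| := by
        rw [← Finset.sum_filter, Finset.sum_image hinj]
    _ ≤ vecNorm1 x :=
        Finset.sum_le_sum_of_subset_of_nonneg (Finset.subset_univ _) fun _ _ _ => abs_nonneg _

lemma colBound_Lmat {n : ℕ} (x : Fin n → ℝ) : ColBound (Lmat x) (vecNorm1 x) := fun j =>
  sum_abs_dite_le x (fun i => (j : ℕ) ≤ i)
    (fun i _ => ⟨(i : ℕ) - j, lt_of_le_of_lt (Nat.sub_le _ _) i.isLt⟩)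
    (fun i k hi hk h => by simp only [Fin.mk.injEq] at h; ext; omega)

lemma colBound_Rmat {n : ℕ} (y : Fin n → ℝ) : ColBound (Rmat y) (vecNorm1 y) := fun j =>
  sum_abs_dite_le y (fun i => (i : ℕ) ≤ j)
    (fun i _ => ⟨n - 1 - ((j : ℕ) - i), by have := i.isLt; omega⟩)
    (fun i k hi hk h => by have := j.isLt; simp only [Fin.mk.injEq] at h; ext; omega)

lemma colBound_L0mat {n : ℕ} (y : Fin n → ℝ) : ColBound (L0mat y) (vecNorm1 y) := fun j =>
  sum_abs_dite_le y (fun i => (j : ℕ) < i)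
    (fun i _ => ⟨(i : ℕ) - j - 1, by have := i.isLt; omega⟩)
    (fun i k hi hk h => by simp only [Fin.mk.injEq] at h; ext; omega)

lemma colBound_R0mat {n : ℕ} (x : Fin n → ℝ) : ColBound (R0mat x) (vecNorm1 x) := fun j =>
  sum_abs_dite_le x (fun i => (i : ℕ) < j)
    (fun i h => ⟨n - ((j : ℕ) - i), by have := j.isLt; omega⟩)
    (fun i k hi hk h => by have := j.isLt; simp only [Fin.mk.injEq] at h; ext; omega)

/-- The bilinear part `L_x R_y − L⁰_y R⁰_x` of the Gohberg–Semencul expression. -/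
def gsB {n : ℕ} (x y : Fin n → ℝ) : Matrix (Fin n) (Fin n) ℝ :=
  Lmat x * Rmat y - L0mat y * R0mat x

lemma gsB_bound {n : ℕ} (x y : Fin n → ℝ) :
    ColBound (gsB x y) (2 * (vecNorm1 x * vecNorm1 y)) := by
  have h := ((colBound_Lmat x).mul (vecNorm1_nonneg x) (colBound_Rmat y)).add
    (((colBound_L0mat y).mul (vecNorm1_nonneg y) (colBound_R0mat x)).smul (-1))
  have e : gsB x y = Lmat x * Rmat y + (-1 : ℝ) • (L0mat y * R0mat x) := by
    simp [gsB, sub_eq_add_neg]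
  rw [e]
  convert h using 1
  rw [abs_neg, abs_one]; ring

lemma gsB_sub_left {n : ℕ} (x x' y : Fin n → ℝ) :
    gsB (x - x') y = gsB x y - gsB x' y := by
  have hL : Lmat (x - x') = Lmat x - Lmat x' := by
    ext i j; simp only [Lmat, Matrix.of_apply, Matrix.sub_apply]; split_ifs <;> simp
  have hR : R0mat (x - x') = R0mat x - R0mat x' := by
    ext i j; simp only [R0mat, Matrix.of_apply, Matrix.sub_apply]; split_ifs <;> simp
  simp only [gsB, hL, hR, sub_mul, mul_sub]; abel

lemma gsB_sub_right {n : ℕ} (x y y' : Fin n → ℝ) :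
    gsB x (y - y') = gsB x y - gsB x y' := by
  have hL : L0mat (y - y') = L0mat y - L0mat y' := by
    ext i j; simp only [L0mat, Matrix.of_apply, Matrix.sub_apply]; split_ifs <;> simp
  have hR : Rmat (y - y') = Rmat y - Rmat y' := by
    ext i j; simp only [Rmat, Matrix.of_apply, Matrix.sub_apply]; split_ifs <;> simp
  simp only [gsB, hL, hR, sub_mul, mul_sub]; abel

lemma vecNorm1_sub_comm {n : ℕ} (x y : Fin n → ℝ) : vecNorm1 (x - y) = vecNorm1 (y - x) := by
  simp only [vecNorm1, Pi.sub_apply, abs_sub_comm]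

lemma vecNorm1_le_add_sub {n : ℕ} (x xt : Fin n → ℝ) :
    vecNorm1 xt ≤ vecNorm1 x + vecNorm1 (xt - x) := by
  simp only [vecNorm1, ← Finset.sum_add_distrib]
  refine Finset.sum_le_sum fun i _ => ?_
  have := abs_add_le (x i) (xt i - x i)
  simpa using this

/-- Theorem 3.1, 1-norm absolute error bound for the Gohberg–Semencul formula. -/
theorem gsf_abs_error_norm1 {n : ℕ} [NeZero n] (x y xt yt : Fin n → ℝ)
    (hx : x 0 ≠ 0) (hxt : xt 0 ≠ 0) (ε : ℝ) (hε : 0 < ε)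
    (h1 : vecNorm1 (xt - x) ≤ ε * vecNorm1 x)
    (h2 : vecNorm1 (yt - y) ≤ ε * vecNorm1 y)
    (εt : ℝ) (hεt : εt = |1 / x 0 - 1 / xt 0| / |1 / x 0|) :
    matNorm1 (GSF x y - GSF xt yt) ≤
      2 / |x 0| * (ε + (ε + (1 + ε) * εt) * (1 + ε)) * vecNorm1 x * vecNorm1 y := by
  have hdec : GSF x y - GSF xt yt =
      (x 0)⁻¹ • (gsB x (y - yt) + gsB (x - xt) yt) + ((x 0)⁻¹ - (xt 0)⁻¹) • gsB xt yt := by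
    rw [gsB_sub_left, gsB_sub_right]
    change (x 0)⁻¹ • gsB x y - (xt 0)⁻¹ • gsB xt yt = _
    module
  have hb := (((gsB_bound x (y - yt)).add (gsB_bound (x - xt) yt)).smul (x 0)⁻¹).add
    ((gsB_bound xt yt).smul ((x 0)⁻¹ - (xt 0)⁻¹))
  rw [← hdec] at hb
  refine hb.matNorm1_le.trans ?_
  have hpos : 0 < |(x 0)⁻¹| := abs_pos.mpr (inv_ne_zero hx)
  have hεt' : |(x 0)⁻¹ - (xt 0)⁻¹| = |(x 0)⁻¹| * εt := by
    rw [hεt, one_div, one_div]; field_simp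
  have hεt0 : 0 ≤ εt := by rw [hεt]; positivity
  rw [hεt', vecNorm1_sub_comm x, vecNorm1_sub_comm y]
  have hX := vecNorm1_nonneg x
  have hY := vecNorm1_nonneg y
  have hXt := vecNorm1_nonneg xt
  have hYt := vecNorm1_nonneg yt
  have h3 : vecNorm1 xt ≤ (1 + ε) * vecNorm1 x := by
    linarith [vecNorm1_le_add_sub x xt]
  have h4 : vecNorm1 yt ≤ (1 + ε) * vecNorm1 y := by
    linarith [vecNorm1_le_add_sub y yt]
  calc _ ≤ |(x 0)⁻¹| * (2 * (vecNorm1 x * (ε * vecNorm1 y)) +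
          2 * ((ε * vecNorm1 x) * ((1 + ε) * vecNorm1 y))) +
        |(x 0)⁻¹| * εt * (2 * (((1 + ε) * vecNorm1 x) * ((1 + ε) * vecNorm1 y))) := by
        gcongr
    _ = _ := by rw [abs_inv]; ring

end
end

section
/- Let x, y, x̃, ỹ ∈ ℝⁿ with first entries ξ₀ ≠ 0 (of x) and ξ̃₀ ≠ 0 (of x̃), let ε > 0 satisfy ‖x̃ − x‖₁ ≤ ε‖x‖₁ and ‖ỹ − y‖₁ ≤ ε‖y‖₁, and set ε̃ = |1/ξ₀ − 1/ξ̃₀| / |1/ξ₀|. Then the Gohberg–Semencul expressions satisfy the spectral-norm bound ‖GSF(x,y) − GSF(x̃,ỹ)‖₂ ≤ (2/|ξ₀|)·[ε + (ε + (1+ε)ε̃)(1+ε)]·‖x‖₁·‖y‖₁. -/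
/-!
Up to the factor `1 / ξ₀`, the Gohberg–Semencul expression is the bilinear map
`B(x, y) = L_x R_y - L⁰_y R⁰_x`. In every row and every column of each of the four triangular
Toeplitz factors, an entry of the generating vector occurs at most once, so the absolute row and
column sums are at most the `ℓ¹` norm of that vector; by the Schur test (`matNorm2_le_of_sums`) so
is the spectral norm (`matNorm2_toeplitz_le`). Hence `‖B(x, y)‖₂ ≤ 2 ‖x‖₁ ‖y‖₁`
(`matNorm2_gsfBilin_le`). The theorem follows from the splitting
`GSF(x,y) - GSF(x̃,ỹ) = (1/ξ₀) (B(x, y - ỹ) + B(x - x̃, ỹ)) + (1/ξ₀ - 1/ξ̃₀) B(x̃, ỹ)`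
together with `‖x̃‖₁ ≤ (1 + ε) ‖x‖₁` and `‖ỹ‖₁ ≤ (1 + ε) ‖y‖₁`.
-/

open Matrix

noncomputable section

lemma vecNorm1_add_le {n : ℕ} (x y : Fin n → ℝ) : vecNorm1 (x + y) ≤ vecNorm1 x + vecNorm1 y := by
  unfold vecNorm1
  rw [← Finset.sum_add_distrib]
  exact Finset.sum_le_sum fun i _ => abs_add_le _ _

lemma vecNorm1_le_of_sub_le {n : ℕ} {x xt : Fin n → ℝ} {ε : ℝ}
    (h : vecNorm1 (xt - x) ≤ ε * vecNorm1 x) : vecNorm1 xt ≤ (1 + ε) * vecNorm1 x := by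
  have := vecNorm1_add_le (xt - x) x
  rw [sub_add_cancel] at this
  linarith

lemma matNorm2_nonneg {n : ℕ} (M : Matrix (Fin n) (Fin n) ℝ) : 0 ≤ matNorm2 M :=
  norm_nonneg _

lemma matNorm2_add_le {n : ℕ} (M N : Matrix (Fin n) (Fin n) ℝ) :
    matNorm2 (M + N) ≤ matNorm2 M + matNorm2 N := by
  unfold matNorm2
  rw [map_add]
  exact norm_add_le _ _

lemma matNorm2_sub_le {n : ℕ} (M N : Matrix (Fin n) (Fin n) ℝ) :
    matNorm2 (M - N) ≤ matNorm2 M + matNorm2 N := by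
  unfold matNorm2
  rw [map_sub]
  exact norm_sub_le _ _

lemma matNorm2_mul_le {n : ℕ} (M N : Matrix (Fin n) (Fin n) ℝ) :
    matNorm2 (M * N) ≤ matNorm2 M * matNorm2 N := by
  unfold matNorm2
  rw [map_mul]
  exact norm_mul_le _ _

lemma matNorm2_smul {n : ℕ} (c : ℝ) (M : Matrix (Fin n) (Fin n) ℝ) :
    matNorm2 (c • M) = |c| * matNorm2 M := by
  unfold matNorm2
  rw [map_smul, norm_smul, Real.norm_eq_abs]

/-- Schur test: a matrix whose absolute row sums and column sums are all at most `c` has spectral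
norm at most `c`. -/
lemma matNorm2_le_of_sums {n : ℕ} (M : Matrix (Fin n) (Fin n) ℝ) (c : ℝ) (hc : 0 ≤ c)
    (hrow : ∀ i, ∑ j, |M i j| ≤ c) (hcol : ∀ j, ∑ i, |M i j| ≤ c) : matNorm2 M ≤ c := by
  unfold matNorm2
  refine ContinuousLinearMap.opNorm_le_bound _ hc fun v => ?_
  refine le_of_sq_le_sq ?_ (by positivity)
  rw [mul_pow, EuclideanSpace.real_norm_sq_eq, EuclideanSpace.real_norm_sq_eq]
  -- Cauchy–Schwarz with the weights `|M i j|`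
  have hi : ∀ i, (Matrix.toEuclideanCLM (𝕜 := ℝ) M v) i ^ 2 ≤ c * ∑ j, |M i j| * v j ^ 2 := by
    intro i
    have hv : (Matrix.toEuclideanCLM (𝕜 := ℝ) M v) i = ∑ j, M i j * v j := by
      rw [Matrix.ofLp_toEuclideanCLM]; rfl
    rw [hv]
    calc (∑ j, M i j * v j) ^ 2 ≤ (∑ j, |M i j|) * ∑ j, |M i j| * v j ^ 2 := by
          refine Finset.sum_sq_le_sum_mul_sum_of_sq_le_mul _ (fun j _ => abs_nonneg _)
            (fun j _ => by positivity) fun j _ => ?_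
          rw [mul_pow, ← sq_abs (M i j)]
          exact le_of_eq (by ring)
      _ ≤ _ := by
          gcongr
          exact hrow i
  calc ∑ i, (Matrix.toEuclideanCLM (𝕜 := ℝ) M v) i ^ 2
      ≤ ∑ i, c * ∑ j, |M i j| * v j ^ 2 := Finset.sum_le_sum fun i _ => hi i
    _ = c * ∑ j, (∑ i, |M i j|) * v j ^ 2 := by
        rw [← Finset.mul_sum, Finset.sum_comm]
        simp_rw [Finset.sum_mul]
    _ ≤ c * ∑ j, c * v j ^ 2 := by
        gcongr with j
        exact hcol j
    _ = c ^ 2 * ∑ j, v j ^ 2 := by rw [← Finset.mul_sum]; ring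

/-- A vector whose nonzero entries are entries of `x` at pairwise distinct positions `g j _` has
`ℓ¹` norm at most that of `x`. -/
lemma sum_abs_dite_le_s3 {n : ℕ} (x : Fin n → ℝ) (p : Fin n → Prop) [DecidablePred p]
    (g : ∀ j, p j → Fin n) (hg : ∀ j j' h h', g j h = g j' h' → j = j') :
    ∑ j, |if h : p j then x (g j h) else 0| ≤ vecNorm1 x := by
  have hinj : Function.Injective fun j : {j // p j} => g j.1 j.2 := fun a b hab =>
    Subtype.ext (hg _ _ _ _ hab)
  calc ∑ j, |if h : p j then x (g j h) else 0|
      = ∑ j ∈ Finset.univ.filter p, |if h : p j then x (g j h) else 0| := by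
        refine (Finset.sum_filter_of_ne fun j _ hj => ?_).symm
        by_contra hp
        simp [hp] at hj
    _ = ∑ j : {j // p j}, |if h : p j.1 then x (g j.1 h) else 0| :=
        Finset.sum_subtype _ (by simp) _
    _ = ∑ j : {j // p j}, |x (g j.1 j.2)| :=
        Finset.sum_congr rfl fun j _ => by rw [dif_pos j.2]
    _ = ∑ k ∈ Finset.univ.map ⟨_, hinj⟩, |x k| := by rw [Finset.sum_map]; rfl
    _ ≤ vecNorm1 x :=
        Finset.sum_le_sum_of_subset_of_nonneg (Finset.subset_univ _) fun _ _ _ => abs_nonneg _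

/-- A matrix whose nonzero entries are entries of `x`, each entry of `x` being used at most once in
every row and in every column, has spectral norm at most `‖x‖₁`. -/
lemma matNorm2_toeplitz_le {n : ℕ} (M : Matrix (Fin n) (Fin n) ℝ) (x : Fin n → ℝ)
    (p : Fin n → Fin n → Prop) [∀ i j, Decidable (p i j)]
    (g : ∀ i j, p i j → Fin n) (hM : ∀ i j, M i j = if h : p i j then x (g i j h) else 0)
    (hrow : ∀ i j j' h h', g i j h = g i j' h' → j = j')
    (hcol : ∀ j i i' h h', g i j h = g i' j h' → i = i') : matNorm2 M ≤ vecNorm1 x := by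
  refine matNorm2_le_of_sums M _ (vecNorm1_nonneg x) (fun i => ?_) fun j => ?_
  · simp_rw [hM]
    exact sum_abs_dite_le_s3 x (p i) (g i) (hrow i)
  · simp_rw [hM]
    exact sum_abs_dite_le_s3 x (fun i => p i j) (fun i => g i j) (hcol j)

lemma matNorm2_Lmat_le {n : ℕ} (x : Fin n → ℝ) : matNorm2 (Lmat x) ≤ vecNorm1 x := by
  refine matNorm2_toeplitz_le _ x (fun i j => (j : ℕ) ≤ i)
    (fun i j _ => ⟨(i : ℕ) - j, lt_of_le_of_lt (Nat.sub_le _ _) i.isLt⟩) (fun i j => rfl) ?_ ?_ <;>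
  · intro a b c h h' e
    simp only [Fin.mk.injEq] at e
    omega

lemma matNorm2_Rmat_le {n : ℕ} (y : Fin n → ℝ) : matNorm2 (Rmat y) ≤ vecNorm1 y := by
  refine matNorm2_toeplitz_le _ y (fun i j => (i : ℕ) ≤ j)
    (fun i j _ => ⟨n - 1 - ((j : ℕ) - i), by have := i.isLt; omega⟩) (fun i j => rfl) ?_ ?_ <;>
  · intro a b c h h' e
    simp only [Fin.mk.injEq] at e
    omega

lemma matNorm2_L0mat_le {n : ℕ} (y : Fin n → ℝ) : matNorm2 (L0mat y) ≤ vecNorm1 y := by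
  refine matNorm2_toeplitz_le _ y (fun i j => (j : ℕ) < i)
    (fun i j _ => ⟨(i : ℕ) - j - 1, by have := i.isLt; omega⟩) (fun i j => rfl) ?_ ?_ <;>
  · intro a b c h h' e
    simp only [Fin.mk.injEq] at e
    omega

lemma matNorm2_R0mat_le {n : ℕ} (x : Fin n → ℝ) : matNorm2 (R0mat x) ≤ vecNorm1 x := by
  refine matNorm2_toeplitz_le _ x (fun i j => (i : ℕ) < j)
    (fun i j h => ⟨n - ((j : ℕ) - i), by have := j.isLt; omega⟩) (fun i j => rfl) ?_ ?_ <;>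
  · intro a b c h h' e
    simp only [Fin.mk.injEq] at e
    omega

/-- The Gohberg–Semencul expression without its scalar factor `1 / ξ₀`; it is bilinear in `x` and
`y`. -/
def gsfBilin {n : ℕ} (x y : Fin n → ℝ) : Matrix (Fin n) (Fin n) ℝ :=
  Lmat x * Rmat y - L0mat y * R0mat x

lemma matNorm2_gsfBilin_le {n : ℕ} (x y : Fin n → ℝ) :
    matNorm2 (gsfBilin x y) ≤ 2 * (vecNorm1 x * vecNorm1 y) := by
  have hL : matNorm2 (Lmat x * Rmat y) ≤ vecNorm1 x * vecNorm1 y :=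
    (matNorm2_mul_le _ _).trans (mul_le_mul (matNorm2_Lmat_le x) (matNorm2_Rmat_le y)
      (matNorm2_nonneg _) (vecNorm1_nonneg x))
  have hR : matNorm2 (L0mat y * R0mat x) ≤ vecNorm1 y * vecNorm1 x :=
    (matNorm2_mul_le _ _).trans (mul_le_mul (matNorm2_L0mat_le y) (matNorm2_R0mat_le x)
      (matNorm2_nonneg _) (vecNorm1_nonneg y))
  have := matNorm2_sub_le (Lmat x * Rmat y) (L0mat y * R0mat x)
  unfold gsfBilin
  linarith

lemma Lmat_sub {n : ℕ} (x y : Fin n → ℝ) : Lmat (x - y) = Lmat x - Lmat y := by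
  ext i j
  simp only [Lmat, Matrix.of_apply, Matrix.sub_apply, Pi.sub_apply]
  split_ifs <;> simp

lemma Rmat_sub {n : ℕ} (x y : Fin n → ℝ) : Rmat (x - y) = Rmat x - Rmat y := by
  ext i j
  simp only [Rmat, Matrix.of_apply, Matrix.sub_apply, Pi.sub_apply]
  split_ifs <;> simp

lemma L0mat_sub {n : ℕ} (x y : Fin n → ℝ) : L0mat (x - y) = L0mat x - L0mat y := by
  ext i j
  simp only [L0mat, Matrix.of_apply, Matrix.sub_apply, Pi.sub_apply]
  split_ifs <;> simp

lemma R0mat_sub {n : ℕ} (x y : Fin n → ℝ) : R0mat (x - y) = R0mat x - R0mat y := by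
  ext i j
  simp only [R0mat, Matrix.of_apply, Matrix.sub_apply, Pi.sub_apply]
  split_ifs <;> simp

lemma gsfBilin_sub_gsfBilin {n : ℕ} (x y xt yt : Fin n → ℝ) :
    gsfBilin x y - gsfBilin xt yt = gsfBilin x (y - yt) + gsfBilin (x - xt) yt := by
  simp only [gsfBilin, Lmat_sub, Rmat_sub, L0mat_sub, R0mat_sub]
  noncomm_ring

/-- Theorem 3.2, spectral-norm absolute error bound for the Gohberg–Semencul formula. -/
theorem gsf_abs_error_norm2 {n : ℕ} [NeZero n] (x y xt yt : Fin n → ℝ)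
    (hx : x 0 ≠ 0) (hxt : xt 0 ≠ 0) (ε : ℝ) (hε : 0 < ε)
    (h1 : vecNorm1 (xt - x) ≤ ε * vecNorm1 x)
    (h2 : vecNorm1 (yt - y) ≤ ε * vecNorm1 y)
    (εt : ℝ) (hεt : εt = |1 / x 0 - 1 / xt 0| / |1 / x 0|) :
    matNorm2 (GSF x y - GSF xt yt) ≤
      2 / |x 0| * (ε + (ε + (1 + ε) * εt) * (1 + ε)) * vecNorm1 x * vecNorm1 y := by
  set X := vecNorm1 x with hX
  set Y := vecNorm1 y with hY
  have hX0 : 0 ≤ X := vecNorm1_nonneg x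
  have hY0 : 0 ≤ Y := vecNorm1_nonneg y
  have hxt' : vecNorm1 xt ≤ (1 + ε) * X := vecNorm1_le_of_sub_le h1
  have hyt' : vecNorm1 yt ≤ (1 + ε) * Y := vecNorm1_le_of_sub_le h2
  rw [vecNorm1_sub_comm] at h1 h2
  have b1 : matNorm2 (gsfBilin x (y - yt)) ≤ 2 * (X * (ε * Y)) :=
    (matNorm2_gsfBilin_le _ _).trans (by gcongr)
  have b2 : matNorm2 (gsfBilin (x - xt) yt) ≤ 2 * (ε * X * ((1 + ε) * Y)) :=
    (matNorm2_gsfBilin_le _ _).trans (by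
      have := vecNorm1_nonneg yt
      gcongr)
  have b3 : matNorm2 (gsfBilin xt yt) ≤ 2 * ((1 + ε) * X * ((1 + ε) * Y)) :=
    (matNorm2_gsfBilin_le _ _).trans (by
      have := vecNorm1_nonneg yt
      gcongr)
  have hd : |(x 0)⁻¹ - (xt 0)⁻¹| = |(x 0)⁻¹| * εt := by
    have : |(x 0)⁻¹| ≠ 0 := abs_ne_zero.mpr (inv_ne_zero hx)
    rw [hεt, one_div, one_div, mul_div_cancel₀ _ this]
  have hεt0 : 0 ≤ εt := by rw [hεt]; positivity
  have hsplit : GSF x y - GSF xt yt =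
      (x 0)⁻¹ • (gsfBilin x (y - yt) + gsfBilin (x - xt) yt) +
        ((x 0)⁻¹ - (xt 0)⁻¹) • gsfBilin xt yt := by
    rw [← gsfBilin_sub_gsfBilin, smul_sub, sub_smul, sub_add_sub_cancel]
    rfl
  rw [hsplit]
  calc _ ≤ |(x 0)⁻¹| * (matNorm2 (gsfBilin x (y - yt)) + matNorm2 (gsfBilin (x - xt) yt)) +
        |(x 0)⁻¹| * εt * matNorm2 (gsfBilin xt yt) := by
        refine (matNorm2_add_le _ _).trans ?_
        rw [matNorm2_smul, matNorm2_smul, hd]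
        gcongr
        exact matNorm2_add_le _ _
    _ ≤ |(x 0)⁻¹| * (2 * (X * (ε * Y)) + 2 * (ε * X * ((1 + ε) * Y))) +
        |(x 0)⁻¹| * εt * (2 * ((1 + ε) * X * ((1 + ε) * Y))) := by gcongr
    _ = _ := by rw [abs_inv]; ring

end
end

section
/- Suppose the inexact shift-and-invert Arnoldi relation (I+γA)⁻¹V + F = V H̃ + h̃ v e_mᵀ holds, with H̃ invertible and VᵀV = I_m. Define G = −(1/γ)(I+γA) F H̃⁻¹ Vᵀ. Then (A + G)V = V·((1/γ)(H̃⁻¹ − I_m)) − (h̃/γ)(I+γA) v e_mᵀ H̃⁻¹. -/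
/-!
Multiplying the inexact relation by `I + γA` on the left and by `H̃⁻¹` on the right gives
`V H̃⁻¹ + (I + γA) F H̃⁻¹ = V + γ A V + h̃ (I + γA) v e_mᵀ H̃⁻¹`. Since `VᵀV = I`, the second
term on the left is `-γ G V`; solving for `A V + G V` and dividing by `γ` gives the claim.
-/

open Matrix

noncomputable section

/-- Lemma 3.1: the inexact shift-and-invert Arnoldi relation rewritten as a
perturbed Arnoldi-like relation for `A + G`. -/
theorem inexact_arnoldi_relation {n m : ℕ} [NeZero m]
    (A : Matrix (Fin n) (Fin n) ℝ) (γ : ℝ) (hγ : γ ≠ 0)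
    (hA : IsUnit (1 + γ • A))
    (V F : Matrix (Fin n) (Fin m) ℝ) (Ht : Matrix (Fin m) (Fin m) ℝ)
    (hHt : IsUnit Ht) (ht : ℝ) (v : Fin n → ℝ)
    (hVV : Vᵀ * V = 1)
    (hrel : (1 + γ • A)⁻¹ * V + F = V * Ht + ht • vecMulVec v (Pi.single (lastIdx m) 1))
    (G : Matrix (Fin n) (Fin n) ℝ)
    (hG : G = -((1 / γ) • ((1 + γ • A) * F * Ht⁻¹ * Vᵀ))) :
    (A + G) * V =
      V * ((1 / γ) • (Ht⁻¹ - 1)) -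
        (ht / γ) • ((1 + γ • A) * vecMulVec v (Pi.single (lastIdx m) 1) * Ht⁻¹) := by
  have hB : IsUnit (1 + γ • A).det := (Matrix.isUnit_iff_isUnit_det _).mp hA
  have hH : IsUnit Ht.det := (Matrix.isUnit_iff_isUnit_det _).mp hHt
  generalize vecMulVec v (Pi.single (lastIdx m) 1) = W at hrel ⊢
  have key : V * Ht⁻¹ + (1 + γ • A) * F * Ht⁻¹
      = V + γ • (A * V) + ht • ((1 + γ • A) * W * Ht⁻¹) := by
    have h := congrArg (fun X => (1 + γ • A) * X * Ht⁻¹) hrel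
    simp only [Matrix.mul_add, Matrix.add_mul _ _ Ht⁻¹, Matrix.mul_smul,
      Matrix.smul_mul _ _ Ht⁻¹, Matrix.mul_nonsing_inv_cancel_left _ _ hB] at h
    rw [← Matrix.mul_assoc _ V Ht, Matrix.mul_nonsing_inv_cancel_right _ _ hH] at h
    rw [h, Matrix.add_mul 1 (γ • A) V, Matrix.one_mul, Matrix.smul_mul]
  have hGV : G * V = -((1 / γ) • ((1 + γ • A) * F * Ht⁻¹)) := by
    rw [hG, Matrix.neg_mul, Matrix.smul_mul, Matrix.mul_assoc _ Vᵀ V, hVV, Matrix.mul_one]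
  rw [Matrix.add_mul, hGV, eq_sub_of_add_eq' key, Matrix.mul_smul, Matrix.mul_sub,
    Matrix.mul_one]
  ext i j
  simp only [Matrix.add_apply, Matrix.sub_apply, Matrix.neg_apply, Matrix.smul_apply,
    smul_eq_mul]
  field_simp
  ring

end
end

section
/- Let x, x̃ ∈ ℝⁿ with first entries ξ₀ ≠ 0 and ξ̃₀ ≠ 0 respectively, let ε > 0 satisfy ‖x̃ − x‖₁ ≤ ε‖x‖₁, and set ε̃ = |1/ξ₀ − 1/ξ̃₀| / |1/ξ₀|. Then ‖(1/ξ₀)L_x − (1/ξ̃₀)L_{x̃}‖₁ ≤ (1/|ξ₀|)·[ε + (1+ε)ε̃]·‖x‖₁. -/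
/-!
The map `x ↦ Lmat x` is linear, and every column of `Lmat z` consists of zeros and distinct entries
of `z`, so `matNorm1 (Lmat z) ≤ vecNorm1 z`. The matrix to be bounded is `Lmat z` for
`z = x / x 0 - xt / xt 0 = -(x 0)⁻¹ • (xt - x) + ((x 0)⁻¹ - (xt 0)⁻¹) • xt`; the triangle inequality
together with `vecNorm1 xt ≤ (1 + ε) * vecNorm1 x` and `|(x 0)⁻¹ - (xt 0)⁻¹| = εt / |x 0|` finishes.
-/

open Matrix

noncomputable section

lemma matNorm1_Lmat_le {n : ℕ} [NeZero n] (z : Fin n → ℝ) :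
    matNorm1 (Lmat z) ≤ vecNorm1 z := by
  refine ciSup_le fun j => ?_
  -- Only the rows `i ≥ j` contribute, and there `i ↦ i - j` is injective.
  have hsum : ∑ i, |Lmat z i j| = ∑ i with (j : ℕ) ≤ (i : Fin n),
      |z ⟨(i : ℕ) - j, lt_of_le_of_lt (Nat.sub_le _ _) i.isLt⟩| := by
    rw [Finset.sum_filter]
    refine Finset.sum_congr rfl fun i _ => ?_
    simp only [Lmat, Matrix.of_apply]
    split_ifs <;> simp
  rw [hsum, vecNorm1, ← Finset.sum_image (f := fun k => |z k|)
    (g := fun i : Fin n => (⟨(i : ℕ) - j, lt_of_le_of_lt (Nat.sub_le _ _) i.isLt⟩ : Fin n))]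
  · exact Finset.sum_le_sum_of_subset_of_nonneg (Finset.subset_univ _)
      fun _ _ _ => abs_nonneg _
  · intro a ha b hb hab
    simp only [Finset.coe_filter, Finset.mem_univ, true_and, Set.mem_ofPred_eq] at ha hb
    simp only [Fin.mk.injEq] at hab
    ext
    omega

lemma Lmat_smul_sub_smul {n : ℕ} (a b : ℝ) (x y : Fin n → ℝ) :
    a • Lmat x - b • Lmat y = Lmat (a • x - b • y) := by
  ext i j
  simp only [Lmat, Matrix.sub_apply, Matrix.smul_apply, Matrix.of_apply, Pi.sub_apply,
    Pi.smul_apply]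
  split_ifs <;> simp

lemma vecNorm1_smul {n : ℕ} (a : ℝ) (x : Fin n → ℝ) :
    vecNorm1 (a • x) = |a| * vecNorm1 x := by
  simp [vecNorm1, Finset.mul_sum, abs_mul]

/-- 1-norm perturbation bound for the scaled lower triangular Toeplitz factor. -/
theorem lmat_scaled_error_norm1 {n : ℕ} [NeZero n] (x xt : Fin n → ℝ)
    (hx : x 0 ≠ 0) (hxt : xt 0 ≠ 0) (ε : ℝ) (hε : 0 < ε)
    (h1 : vecNorm1 (xt - x) ≤ ε * vecNorm1 x)
    (εt : ℝ) (hεt : εt = |1 / x 0 - 1 / xt 0| / |1 / x 0|) :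
    matNorm1 ((x 0)⁻¹ • Lmat x - (xt 0)⁻¹ • Lmat xt) ≤
      1 / |x 0| * (ε + (1 + ε) * εt) * vecNorm1 x := by
  have hdiff : |(x 0)⁻¹ - (xt 0)⁻¹| = 1 / |x 0| * εt := by
    have := abs_ne_zero.mpr hx
    rw [hεt, one_div, one_div, one_div, abs_inv]
    field_simp
  have hxt1 : vecNorm1 xt ≤ (1 + ε) * vecNorm1 x := by
    have h := vecNorm1_add_le (xt - x) x
    rw [sub_add_cancel] at h
    linarith
  have hz : (x 0)⁻¹ • x - (xt 0)⁻¹ • xt =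
      (-(x 0)⁻¹) • (xt - x) + ((x 0)⁻¹ - (xt 0)⁻¹) • xt := by
    module
  rw [Lmat_smul_sub_smul]
  calc matNorm1 (Lmat ((x 0)⁻¹ • x - (xt 0)⁻¹ • xt))
      ≤ vecNorm1 ((x 0)⁻¹ • x - (xt 0)⁻¹ • xt) := matNorm1_Lmat_le _
    _ ≤ |-(x 0)⁻¹| * vecNorm1 (xt - x) + |(x 0)⁻¹ - (xt 0)⁻¹| * vecNorm1 xt := by
        rw [hz, ← vecNorm1_smul, ← vecNorm1_smul]
        exact vecNorm1_add_le _ _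
    _ ≤ |-(x 0)⁻¹| * (ε * vecNorm1 x) +
          |(x 0)⁻¹ - (xt 0)⁻¹| * ((1 + ε) * vecNorm1 x) := by
        gcongr
    _ = 1 / |x 0| * (ε + (1 + ε) * εt) * vecNorm1 x := by
        rw [hdiff, abs_neg, abs_inv]
        ring

end
end
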